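/- Let α > 0, β ∈ ℝ, a > 0, ξ > 0 and I + N > 0 be real numbers with 4ξ(I+N) < α, and let w(s) = 1/(1 + exp(−α(a·s/(I+N) − β))) − ξ·a·s. Define s₋ = −((I+N)/(α·a))·(log(α/(2ξ(I+N)) − 1 + √((1 − α/(2ξ(I+N)))² − 1)) − α·β) and s_br = −((I+N)/(α·a))·(log(α/(2ξ(I+N)) − 1 − √((1 − α/(2ξ(I+N)))² − 1)) − α·β). Then w attains its maximum over the half-line [s₋, ∞) at s_br, i.e., w(s) ≤ w(s_br) for all s ∈ [s₋, ∞). -/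

import Mathlib

/-!
In the variable `u = α (a s / (I + N) - β)` the payoff is, up to an additive constant,
`sigmoid u - c u` with `c = ξ (I + N) / α`. Since `sigmoid' u = 1 / (2 (1 + cosh u))`, its
derivative is nonnegative exactly when `|u| ≤ t`, where `t = arcosh x` with
`x = α / (2 ξ (I + N)) - 1` solves `sigmoid' t = c`. Hence the payoff increases on `[-t, t]` and
decreases on `[t, ∞)`. The roots `x ± √(x² - 1)` are mutually inverse, so `s₋` and `s_br`
correspond to `u = -t` and `u = t`.
-/

open Real Set

lemma deriv_sigmoid_eq_inv_two_mul_one_add_cosh (u : ℝ) :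
    deriv sigmoid u = (2 * (1 + cosh u))⁻¹ := by
  calc deriv sigmoid u = sigmoid u * sigmoid (-u) := by rw [deriv_sigmoid, sigmoid_neg]
    _ = ((1 + exp (-u)) * (1 + exp u))⁻¹ := by
      rw [sigmoid_def, sigmoid_def, neg_neg, mul_inv]
    _ = (2 * (1 + cosh u))⁻¹ := by
      congr 1
      have exp_neg_mul_exp : exp (-u) * exp u = 1 := by rw [← exp_add, neg_add_cancel, exp_zero]
      rw [cosh_eq]
      linear_combination exp_neg_mul_exp

lemma deriv_sigmoid_le_deriv_sigmoid_iff {u v : ℝ} :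
    deriv sigmoid u ≤ deriv sigmoid v ↔ |v| ≤ |u| := by
  rw [deriv_sigmoid_eq_inv_two_mul_one_add_cosh, deriv_sigmoid_eq_inv_two_mul_one_add_cosh,
    inv_le_inv₀ (by positivity) (by positivity), mul_le_mul_iff_right₀ two_pos,
    add_le_add_iff_left, cosh_le_cosh]

lemma deriv_sigmoid_arcosh {x : ℝ} (hx : 1 ≤ x) :
    deriv sigmoid (arcosh x) = (2 * (1 + x))⁻¹ := by
  rw [deriv_sigmoid_eq_inv_two_mul_one_add_cosh, cosh_arcosh hx]

lemma isMaxOn_sigmoid_sub_deriv_mul {t : ℝ} (ht : 0 ≤ t) :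
    IsMaxOn (fun u ↦ sigmoid u - deriv sigmoid t * u) (Ici (-t)) t := by
  have hderiv (u : ℝ) : HasDerivAt (fun u ↦ sigmoid u - deriv sigmoid t * u)
      (deriv sigmoid u - deriv sigmoid t) u :=
    differentiableAt_sigmoid.hasDerivAt.sub (hasDerivAt_const_mul _)
  have hdiff : Differentiable ℝ (fun u ↦ sigmoid u - deriv sigmoid t * u) :=
    fun u ↦ (hderiv u).differentiableAt
  refine isMaxOn_Ici_of_deriv hdiff.continuous.continuousAt hdiff.continuous.continuousAt
    hdiff.differentiableOn hdiff.differentiableOn (fun u hu ↦ ?_) (fun u hu ↦ ?_)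
  · rw [(hderiv u).deriv, sub_nonneg, deriv_sigmoid_le_deriv_sigmoid_iff, abs_of_nonneg ht]
    exact abs_le.mpr ⟨hu.1.le, hu.2.le⟩
  · rw [(hderiv u).deriv, sub_nonpos, deriv_sigmoid_le_deriv_sigmoid_iff]
    exact abs_le_abs_of_nonneg ht (mem_Ioi.mp hu).le

lemma log_sub_sqrt_sq_sub_one {x : ℝ} (hx : 1 ≤ x) : log (x - √(x ^ 2 - 1)) = -arcosh x := by
  rw [← add_sqrt_self_sq_sub_one_inv hx, log_inv, arcosh]

/-- The argument `α (a s / M - β)` at which the sigmoid utility is evaluated when the transmit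
power is `s`; `M` is the interference-plus-noise power, the `I + N` of the paper. -/
noncomputable def utilityArg (α β a M s : ℝ) : ℝ := α * (a * s / M - β)

section utilityArg

variable {α a M : ℝ}

lemma utilityArg_mono (β : ℝ) (hα : 0 ≤ α) (ha : 0 ≤ a) (hM : 0 ≤ M) :
    Monotone (utilityArg α β a M) := by
  intro s t hst
  unfold utilityArg
  gcongr

lemma utilityArg_neg_div_mul_sub (β L : ℝ) (hα : α ≠ 0) (ha : a ≠ 0) (hM : M ≠ 0) :
    utilityArg α β a M (-(M / (α * a)) * (L - α * β)) = -L := by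
  unfold utilityArg
  field

lemma price_eq_mul_utilityArg_add (β ξ s : ℝ) (hα : α ≠ 0) (hM : M ≠ 0) :
    ξ * a * s = ξ * M / α * utilityArg α β a M s + ξ * M * β := by
  unfold utilityArg
  field

end utilityArg

/-- On the half-line `[s₋, ∞)`, the payoff `w` attains its maximum at the
best reply `s_br`. -/
theorem payoff_max_on_Ici_lowerCritical
    (α β a ξ I N : ℝ) (hα : 0 < α) (ha : 0 < a) (hξ : 0 < ξ) (hIN : 0 < I + N)
    (hcond : 4 * ξ * (I + N) < α)
    (w : ℝ → ℝ)
    (hw : w = fun s => 1 / (1 + Real.exp (-(α * (a * s / (I + N) - β)))) - ξ * a * s)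
    (sminus sbr : ℝ)
    (hsminus : sminus = -((I + N) / (α * a)) *
      (Real.log (α / (2 * ξ * (I + N)) - 1 +
          Real.sqrt ((1 - α / (2 * ξ * (I + N))) ^ 2 - 1)) - α * β))
    (hsbr : sbr = -((I + N) / (α * a)) *
      (Real.log (α / (2 * ξ * (I + N)) - 1 -
          Real.sqrt ((1 - α / (2 * ξ * (I + N))) ^ 2 - 1)) - α * β)) :
    ∀ s ∈ Set.Ici sminus, w s ≤ w sbr := by
  intro s hs
  set M := I + N
  set x := α / (2 * ξ * M) - 1 with hx_def
  have one_le_x : 1 ≤ x := by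
    rw [hx_def, le_sub_iff_add_le, le_div_iff₀ (by positivity)]
    linarith
  have slope_eq : ξ * M / α = deriv sigmoid (arcosh x) := by
    rw [deriv_sigmoid_arcosh one_le_x, hx_def, add_sub_cancel]
    field
  rw [show 1 - α / (2 * ξ * M) = -x by ring, neg_sq] at hsminus hsbr
  have arg_sminus : utilityArg α β a M sminus = -arcosh x := by
    rw [hsminus, utilityArg_neg_div_mul_sub β _ hα.ne' ha.ne' hIN.ne', arcosh]
  have arg_sbr : utilityArg α β a M sbr = arcosh x := by
    rw [hsbr, utilityArg_neg_div_mul_sub β _ hα.ne' ha.ne' hIN.ne',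
      log_sub_sqrt_sq_sub_one one_le_x, neg_neg]
  have payoff_eq (r : ℝ) : w r = sigmoid (utilityArg α β a M r) -
      deriv sigmoid (arcosh x) * utilityArg α β a M r - ξ * M * β := by
    rw [← slope_eq, sub_sub, ← price_eq_mul_utilityArg_add β ξ r hα.ne' hIN.ne', hw, sigmoid_def,
      ← one_div, utilityArg]
  have arg_mem : -arcosh x ≤ utilityArg α β a M s :=
    arg_sminus ▸ utilityArg_mono β hα.le ha.le hIN.le hs
  rw [payoff_eq, payoff_eq, arg_sbr]
  exact sub_le_sub_right (isMaxOn_sigmoid_sub_deriv_mul (arcosh_nonneg one_le_x) arg_mem) _
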